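/- Let n be a positive integer, let 𝒜 be a finite family of subsets of {1,…,n} such that every S ∈ 𝒜 is an interval (a set of consecutive integers), and fix f > 0. Define v^agg : [0,1]^n → ℝ by v^agg(x) = max{ f·y : y ∈ [0,1], ∑_{j∈S} x_j ≥ y for every S ∈ 𝒜 }, and let g : [0,1]^n → ℝ be the concavification of the restriction of v^agg to {0,1}^n, i.e., g(x) = max{ ∑_{β∈{0,1}^n} α_β v^agg(β) : α_β ≥ 0, ∑_β α_β = 1, ∑_β α_β β = x }. Then g(x) = v^agg(x) for every x ∈ [0,1]^n. -/

import Mathlib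

/-- The real vector in `{0,1}^n` associated with a Boolean vector `β`. -/
def toVec {n : ℕ} (β : Fin n → Bool) : Fin n → ℝ := fun i => if β i then 1 else 0

/-- The concavification of `h : {0,1}^n → ℝ`:
`g(x) = max{ ∑_β α_β h(β) : α ≥ 0, ∑_β α_β = 1, ∑_β α_β β = x }`. -/
noncomputable def concavify (n : ℕ) (h : (Fin n → Bool) → ℝ) (x : Fin n → ℝ) : ℝ :=
  sSup {t | ∃ α : (Fin n → Bool) → ℝ,
    (∀ β, 0 ≤ α β) ∧ (∑ β, α β) = 1 ∧
    (∀ i, (∑ β, α β * toVec β i) = x i) ∧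
    t = ∑ β, α β * h β}

/-- `v^agg(x) = max{ f·y : y ∈ [0,1], ∑_{j∈S} x_j ≥ y for every S ∈ 𝒜 }`. -/
noncomputable def vagg {N : Type*} (A : Finset (Finset N)) (f : ℝ) (x : N → ℝ) : ℝ :=
  sSup {t | ∃ y : ℝ, y ∈ Set.Icc (0 : ℝ) 1 ∧
    (∀ S ∈ A, y ≤ ∑ j ∈ S, x j) ∧ t = f * y}

/-!
The function `v^agg` is concave, so by Jensen's inequality it dominates its concavification.

For the converse let `y` be optimal at `x`, so that `v^agg(x) = f y`. Capping the coordinates of `x`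
at `y` keeps every set of `𝒜` at weight at least `y`, so `x = y z + (1 - y) w` with `z`, `w` in the
cube and `z(S) ≥ 1` for every `S ∈ 𝒜`. Concavity of the concavification reduces the claim to showing
that it is at least `f` at `z`, which systematic sampling does: with `P` the partial sums of `z`
and `θ` uniform on `(0, 1]`, round `z i` to `⌊P (i + 1) + θ⌋ - ⌊P i + θ⌋ ∈ {0, 1}`. The expectation
of this is `z i`, and over an interval `S` it telescopes to at least `⌊z(S)⌋ ≥ 1`, so every sampled
binary vector has value `f`.
-/

open MeasureTheory

section Aggregate

variable {ι : Type*} {A : Finset (Finset ι)} {x : ι → ℝ}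

/-- The feasible set of the linear program defining `vagg A f x`. -/
def coverLevels (A : Finset (Finset ι)) (x : ι → ℝ) : Set ℝ :=
  {y ∈ Set.Icc 0 1 | ∀ S ∈ A, y ≤ ∑ j ∈ S, x j}

lemma isCompact_coverLevels (A : Finset (Finset ι)) (x : ι → ℝ) : IsCompact (coverLevels A x) := by
  have hclosed : IsClosed {y : ℝ | ∀ S ∈ A, y ≤ ∑ j ∈ S, x j} := by
    simp only [Set.ofPred_forall]
    exact isClosed_biInter fun S _ => isClosed_Iic
  exact isCompact_Icc.inter_right hclosed

lemma zero_mem_coverLevels (A : Finset (Finset ι)) (hx : 0 ≤ x) : 0 ∈ coverLevels A x :=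
  ⟨by simp, fun _ _ => Finset.sum_nonneg fun j _ => hx j⟩

lemma isGreatest_vagg (A : Finset (Finset ι)) (f : ℝ) (hx : 0 ≤ x) :
    IsGreatest ((fun y => f * y) '' coverLevels A x) (vagg A f x) := by
  have hvagg : vagg A f x = sSup ((fun y => f * y) '' coverLevels A x) := by
    simp only [vagg, coverLevels, Set.image, Set.mem_ofPred_eq, and_assoc, eq_comm]
  rw [hvagg]
  exact ((isCompact_coverLevels A x).image (by fun_prop)).isGreatest_sSup
    (Set.Nonempty.image _ ⟨0, zero_mem_coverLevels A hx⟩)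

lemma mul_le_vagg (f : ℝ) (hx : 0 ≤ x) {y : ℝ} (hy : y ∈ coverLevels A x) :
    f * y ≤ vagg A f x :=
  (isGreatest_vagg A f hx).2 (Set.mem_image_of_mem _ hy)

lemma vagg_nonneg (A : Finset (Finset ι)) (f : ℝ) (hx : 0 ≤ x) : 0 ≤ vagg A f x := by
  simpa using mul_le_vagg f hx (zero_mem_coverLevels A hx)

lemma le_vagg_of_forall_one_le_sum (f : ℝ) (hx : 0 ≤ x) (hA : ∀ S ∈ A, 1 ≤ ∑ j ∈ S, x j) :
    f ≤ vagg A f x := by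
  simpa using mul_le_vagg f hx (y := 1) ⟨by simp, hA⟩

lemma smul_add_smul_mem_coverLevels {x' : ι → ℝ} {y y' a b : ℝ} (hy : y ∈ coverLevels A x)
    (hy' : y' ∈ coverLevels A x') (ha : 0 ≤ a) (hb : 0 ≤ b) (hab : a + b = 1) :
    a • y + b • y' ∈ coverLevels A (a • x + b • x') := by
  refine ⟨convex_Icc 0 1 hy.1 hy'.1 ha hb hab, fun S hS => ?_⟩
  calc a * y + b * y' ≤ a * ∑ j ∈ S, x j + b * ∑ j ∈ S, x' j := by
        gcongr
        exacts [hy.2 S hS, hy'.2 S hS]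
    _ = ∑ j ∈ S, (a • x + b • x') j := by
        simp [Finset.sum_add_distrib, Finset.mul_sum]

lemma concaveOn_vagg (A : Finset (Finset ι)) (f : ℝ) : ConcaveOn ℝ (Set.Ici 0) (vagg A f) := by
  refine ⟨convex_Ici 0, fun x hx x' hx' a b ha hb hab => ?_⟩
  obtain ⟨y, hy, hyx⟩ := (isGreatest_vagg A f hx).1
  obtain ⟨y', hy', hyx'⟩ := (isGreatest_vagg A f hx').1
  calc a * vagg A f x + b * vagg A f x' = f * (a * y + b * y') := by
        rw [← hyx, ← hyx']
        ring
    _ ≤ vagg A f (a • x + b • x') :=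
        mul_le_vagg f (convex_Ici 0 hx hx' ha hb hab)
          (smul_add_smul_mem_coverLevels hy hy' ha hb hab)

end Aggregate

section Truncation

variable {ι : Type*}

lemma le_sum_min_of_le_sum {s : Finset ι} {a : ι → ℝ} {c : ℝ} (ha : ∀ i ∈ s, 0 ≤ a i) (hc : 0 ≤ c)
    (h : c ≤ ∑ i ∈ s, a i) : c ≤ ∑ i ∈ s, min (a i) c := by
  by_cases hlarge : ∃ i ∈ s, c ≤ a i
  · obtain ⟨i, hi, hci⟩ := hlarge
    calc c = min (a i) c := (min_eq_right hci).symm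
      _ ≤ ∑ i ∈ s, min (a i) c :=
        Finset.single_le_sum (f := fun i => min (a i) c) (fun j hj => le_min (ha j hj) hc) hi
  · push Not at hlarge
    rwa [Finset.sum_congr rfl fun i hi => min_eq_left (hlarge i hi).le]

lemma exists_smul_add_smul_eq_of_mem_coverLevels {A : Finset (Finset ι)} {x : ι → ℝ}
    (hx : x ∈ Set.Icc 0 1) {y : ℝ} (hy : 0 < y) (hyx : y ∈ coverLevels A x) :
    ∃ z ∈ Set.Icc (0 : ι → ℝ) 1, ∃ w ∈ Set.Icc (0 : ι → ℝ) 1,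
      (∀ S ∈ A, 1 ≤ ∑ j ∈ S, z j) ∧ y • z + (1 - y) • w = x := by
  obtain ⟨⟨-, hy1⟩, hyS⟩ := hyx
  have hmin : ∀ i, 0 ≤ min (x i) y := fun i => le_min (hx.1 i) hy.le
  have hexcess : ∀ i, max (x i - y) 0 ≤ 1 - y := fun i =>
    max_le (sub_le_sub_right (hx.2 i) y) (sub_nonneg.2 hy1)
  refine ⟨fun i => min (x i) y / y, ⟨fun i => div_nonneg (hmin i) hy.le, fun i =>
      div_le_one_of_le₀ (min_le_right _ _) hy.le⟩,
    fun i => max (x i - y) 0 / (1 - y), ⟨fun i => div_nonneg (le_max_right _ _) (sub_nonneg.2 hy1),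
      fun i => div_le_one_of_le₀ (hexcess i) (sub_nonneg.2 hy1)⟩, fun S hS => ?_, ?_⟩
  · rw [← Finset.sum_div, one_le_div hy]
    exact le_sum_min_of_le_sum (fun i _ => hx.1 i) hy.le (hyS S hS)
  · ext i
    -- At `y = 1` the numerator vanishes together with the denominator.
    have hcancel : (1 - y) * (max (x i - y) 0 / (1 - y)) = max (x i - y) 0 :=
      mul_div_cancel_of_imp' fun h => le_antisymm (h ▸ hexcess i) (le_max_right _ _)
    simp only [Pi.add_apply, Pi.smul_apply, smul_eq_mul, hcancel, mul_div_cancel₀ _ hy.ne']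
    rcases le_total (x i) y with h | h <;> simp [h]

end Truncation

section BinaryMixtures

variable {n : ℕ}

lemma toVec_nonneg (β : Fin n → Bool) : 0 ≤ toVec β := fun i => by
  unfold toVec
  split_ifs <;> simp

/-- The weights `α` on `{0,1}^n` that represent `x` as a convex combination of binary vectors. -/
def binaryMixtures (x : Fin n → ℝ) : Set ((Fin n → Bool) → ℝ) :=
  {α ∈ stdSimplex ℝ (Fin n → Bool) | ∑ β, α β • toVec β = x}

lemma isCompact_binaryMixtures (x : Fin n → ℝ) : IsCompact (binaryMixtures x) :=
  (isCompact_stdSimplex ℝ _).inter_right (isClosed_eq (by fun_prop) continuous_const)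

lemma isGreatest_concavify (h : (Fin n → Bool) → ℝ) {x : Fin n → ℝ}
    (hx : (binaryMixtures x).Nonempty) :
    IsGreatest ((fun α => ∑ β, α β * h β) '' binaryMixtures x) (concavify n h x) := by
  have hconcavify : concavify n h x = sSup ((fun α => ∑ β, α β * h β) '' binaryMixtures x) := by
    simp only [concavify, binaryMixtures, stdSimplex, Set.image, Set.mem_ofPred_eq, and_assoc,
      funext_iff, Finset.sum_apply, Pi.smul_apply, smul_eq_mul, eq_comm]
  rw [hconcavify]
  exact ((isCompact_binaryMixtures x).image (by fun_prop)).isGreatest_sSup (hx.image _)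

lemma concavify_le_of_concaveOn {s : Set (Fin n → ℝ)} {φ : (Fin n → ℝ) → ℝ}
    (hφ : ConcaveOn ℝ s φ) (hs : ∀ β, toVec β ∈ s) {x : Fin n → ℝ}
    (hx : (binaryMixtures x).Nonempty) : concavify n (fun β => φ (toVec β)) x ≤ φ x := by
  obtain ⟨α, ⟨hα, rfl⟩, hαx⟩ := (isGreatest_concavify (fun β => φ (toVec β)) hx).1
  rw [← hαx]
  exact hφ.le_map_sum (fun β _ => hα.1 β) hα.2 fun β _ => hs β

lemma le_concavify {h : (Fin n → Bool) → ℝ} {x : Fin n → ℝ} {α : (Fin n → Bool) → ℝ}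
    (hα : α ∈ binaryMixtures x) {c : ℝ} (hc : ∀ β, α β ≠ 0 → c ≤ h β) :
    c ≤ concavify n h x := by
  calc c = ∑ β, α β * c := by rw [← Finset.sum_mul, hα.1.2, one_mul]
    _ ≤ ∑ β, α β * h β := Finset.sum_le_sum fun β _ => by
        rcases eq_or_ne (α β) 0 with hβ | hβ
        · simp [hβ]
        · exact mul_le_mul_of_nonneg_left (hc β hβ) (hα.1.1 β)
    _ ≤ concavify n h x := (isGreatest_concavify h ⟨α, hα⟩).2 (Set.mem_image_of_mem _ hα)

lemma smul_add_smul_mem_binaryMixtures {x x' : Fin n → ℝ} {α α' : (Fin n → Bool) → ℝ} {a b : ℝ}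
    (hα : α ∈ binaryMixtures x) (hα' : α' ∈ binaryMixtures x') (ha : 0 ≤ a) (hb : 0 ≤ b)
    (hab : a + b = 1) : a • α + b • α' ∈ binaryMixtures (a • x + b • x') := by
  refine ⟨convex_stdSimplex ℝ _ hα.1 hα'.1 ha hb hab, ?_⟩
  simp only [← hα.2, ← hα'.2, Finset.smul_sum, ← Finset.sum_add_distrib, smul_smul, Pi.add_apply,
    Pi.smul_apply, smul_eq_mul, add_smul]

lemma concaveOn_concavify (h : (Fin n → Bool) → ℝ) :
    ConcaveOn ℝ {x | (binaryMixtures x).Nonempty} (concavify n h) := by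
  refine ⟨fun x ⟨α, hα⟩ x' ⟨α', hα'⟩ a b ha hb hab =>
    ⟨_, smul_add_smul_mem_binaryMixtures hα hα' ha hb hab⟩, fun x hx x' hx' a b ha hb hab => ?_⟩
  obtain ⟨α, hα, hαx⟩ := (isGreatest_concavify h hx).1
  obtain ⟨α', hα', hαx'⟩ := (isGreatest_concavify h hx').1
  have hmix := smul_add_smul_mem_binaryMixtures hα hα' ha hb hab
  calc a * concavify n h x + b * concavify n h x' = ∑ β, (a • α + b • α') β * h β := by
        simp only [← hαx, ← hαx', Finset.mul_sum, ← Finset.sum_add_distrib, Pi.add_apply,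
          Pi.smul_apply, smul_eq_mul, add_mul, mul_assoc]
    _ ≤ concavify n h (a • x + b • x') :=
        (isGreatest_concavify h ⟨_, hmix⟩).2 (Set.mem_image_of_mem _ hmix)

lemma measureReal_preimage_mem_binaryMixtures {Ω : Type*} [MeasurableSpace Ω] (μ : Measure Ω)
    [IsProbabilityMeasure μ] {B : Ω → Fin n → Bool} (hB : Measurable B) :
    (fun β => μ.real (B ⁻¹' {β})) ∈ binaryMixtures (fun i => ∫ ω, toVec (B ω) i ∂μ) := by
  have := Measure.isProbabilityMeasure_map (μ := μ) hB.aemeasurable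
  have hlaw : ∀ β, μ.real (B ⁻¹' {β}) = (μ.map B).real {β} := fun β =>
    (map_measureReal_apply hB (measurableSet_singleton β)).symm
  simp only [hlaw]
  refine ⟨⟨fun β => measureReal_nonneg, ?_⟩, ?_⟩
  · rw [sum_measureReal_singleton, Finset.coe_univ, probReal_univ]
  · ext i
    rw [← integral_map (f := fun β => toVec β i) hB.aemeasurable (by fun_prop),
      integral_fintype .of_finite]
    simp only [Finset.sum_apply, Pi.smul_apply]

end BinaryMixtures

section FloorIntegral

lemma intervalIntegrable_floor_add (a b c : ℝ) :
    IntervalIntegrable (fun θ => (⌊a + θ⌋ : ℝ)) volume b c := by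
  have hmono : Monotone fun θ : ℝ => (⌊a + θ⌋ : ℝ) := fun _ _ h =>
    Int.cast_mono (Int.floor_mono (add_le_add_right h a))
  exact hmono.intervalIntegrable

lemma integral_fract_add (a : ℝ) : ∫ θ in (0 : ℝ)..1, Int.fract (a + θ) = 1 / 2 := by
  calc ∫ θ in (0 : ℝ)..1, Int.fract (a + θ) = ∫ θ in a..a + 1, Int.fract θ := by
        rw [intervalIntegral.integral_comp_add_left Int.fract a, add_zero]
    _ = ∫ θ in (0 : ℝ)..1, Int.fract θ := by
        simpa using (Int.fract_periodic ℝ).intervalIntegral_add_eq a 0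
    _ = ∫ θ in (0 : ℝ)..1, θ := intervalIntegral.integral_congr_Ioo_of_le zero_le_one
        fun θ hθ => Int.fract_eq_self.2 ⟨hθ.1.le, hθ.2⟩
    _ = 1 / 2 := by simp

lemma integral_floor_add (a : ℝ) : ∫ θ in (0 : ℝ)..1, (⌊a + θ⌋ : ℝ) = a := by
  have hfract : ∫ θ in (0 : ℝ)..1, Int.fract (a + θ) =
      (∫ θ in (0 : ℝ)..1, (a + θ)) - ∫ θ in (0 : ℝ)..1, (⌊a + θ⌋ : ℝ) :=
    intervalIntegral.integral_sub ((continuous_const_add a).intervalIntegrable _ _)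
      (intervalIntegrable_floor_add a 0 1)
  have hlinear : ∫ θ in (0 : ℝ)..1, (a + θ) = a + 1 / 2 := by
    rw [intervalIntegral.integral_add intervalIntegrable_const
      intervalIntegral.intervalIntegrable_id]
    simp
  linarith [integral_fract_add a]

end FloorIntegral

lemma exists_eq_Icc_of_ordConnected {α : Type*} [LinearOrder α] [LocallyFiniteOrder α]
    {S : Finset α} (hne : S.Nonempty) (hS : (S : Set α).OrdConnected) :
    ∃ l u, l ≤ u ∧ S = Finset.Icc l u :=
  ⟨S.min' hne, S.max' hne, S.min'_le_max' hne, Finset.Subset.antisymm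
    (fun j hj => Finset.mem_Icc.2 ⟨S.min'_le j hj, S.le_max' j hj⟩)
    (fun _ hj => hS.out (S.min'_mem hne) (S.max'_mem hne) (Finset.mem_Icc.1 hj))⟩

section SystematicSampling

variable {n : ℕ} {z : Fin n → ℝ}

/-- Systematic sampling: with the coordinates of `z` laid end to end on the half-line, coordinate
`i` is selected when its segment shifted by `θ` crosses an integer. -/
noncomputable def systematicSample (z : Fin n → ℝ) (θ : ℝ) (i : Fin n) : Bool :=
  decide (⌊Fin.partialSum z i.castSucc + θ⌋ < ⌊Fin.partialSum z i.succ + θ⌋)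

lemma measurable_systematicSample (z : Fin n → ℝ) : Measurable (systematicSample z) :=
  measurable_pi_iff.2 fun i => measurable_to_bool <| by
    have h : (systematicSample z · i) ⁻¹' {true} =
        {θ | ⌊Fin.partialSum z i.castSucc + θ⌋ < ⌊Fin.partialSum z i.succ + θ⌋} := by
      ext θ
      simp [systematicSample]
    rw [h]
    exact measurableSet_lt (by fun_prop) (by fun_prop)

lemma toVec_systematicSample (hz : z ∈ Set.Icc 0 1) (θ : ℝ) (i : Fin n) :
    toVec (systematicSample z θ) i =
      ⌊Fin.partialSum z i.succ + θ⌋ - ⌊Fin.partialSum z i.castSucc + θ⌋ := by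
  have hsucc : Fin.partialSum z i.succ + θ = Fin.partialSum z i.castSucc + θ + z i := by
    rw [Fin.partialSum_succ]
    ring
  have hlower : ⌊Fin.partialSum z i.castSucc + θ⌋ ≤ ⌊Fin.partialSum z i.succ + θ⌋ := by
    rw [hsucc]
    exact Int.floor_mono (le_add_of_nonneg_right (hz.1 i))
  have hupper : ⌊Fin.partialSum z i.succ + θ⌋ ≤ ⌊Fin.partialSum z i.castSucc + θ⌋ + 1 := by
    rw [← Int.floor_add_one, hsucc]
    exact Int.floor_mono (add_le_add_right (hz.2 i) _)
  by_cases hlt : ⌊Fin.partialSum z i.castSucc + θ⌋ < ⌊Fin.partialSum z i.succ + θ⌋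
  · simp [toVec, systematicSample, le_antisymm hupper hlt]
  · simp [toVec, systematicSample, le_antisymm (not_lt.1 hlt) hlower]

lemma sum_Icc_partialSum (z : Fin n → ℝ) {l u : Fin n} (hlu : l ≤ u) :
    ∑ i ∈ Finset.Icc l u, z i = Fin.partialSum z u.succ - Fin.partialSum z l.castSucc := by
  rw [← Fin.sum_Icc_sub hlu]
  simp [Fin.partialSum_succ]

lemma floor_sum_le_sum_systematicSample (hz : z ∈ Set.Icc 0 1) (θ : ℝ) {S : Finset (Fin n)}
    (hS : (S : Set (Fin n)).OrdConnected) :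
    (⌊∑ i ∈ S, z i⌋ : ℝ) ≤ ∑ i ∈ S, toVec (systematicSample z θ) i := by
  rcases S.eq_empty_or_nonempty with rfl | hne
  · simp
  obtain ⟨l, u, hlu, rfl⟩ := exists_eq_Icc_of_ordConnected hne hS
  have htelescope : ∑ i ∈ Finset.Icc l u, toVec (systematicSample z θ) i =
      (⌊Fin.partialSum z u.succ + θ⌋ - ⌊Fin.partialSum z l.castSucc + θ⌋ : ℝ) := by
    simp only [toVec_systematicSample hz]
    exact Fin.sum_Icc_sub hlu fun k => (⌊Fin.partialSum z k + θ⌋ : ℝ)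
  rw [htelescope, sum_Icc_partialSum z hlu]
  have hfloor := Int.le_floor_add (Fin.partialSum z u.succ - Fin.partialSum z l.castSucc)
    (Fin.partialSum z l.castSucc + θ)
  rw [← add_assoc, sub_add_cancel] at hfloor
  exact_mod_cast le_sub_iff_add_le.2 hfloor

lemma integral_toVec_systematicSample (hz : z ∈ Set.Icc 0 1) (i : Fin n) :
    ∫ θ in Set.Ioc 0 1, toVec (systematicSample z θ) i = z i := by
  simp only [← intervalIntegral.integral_of_le zero_le_one, toVec_systematicSample hz]
  rw [intervalIntegral.integral_sub (intervalIntegrable_floor_add _ 0 1)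
    (intervalIntegrable_floor_add _ 0 1), integral_floor_add, integral_floor_add,
    Fin.partialSum_succ, add_sub_cancel_left]

lemma exists_binaryMixture_floor_sum_le (hz : z ∈ Set.Icc 0 1) :
    ∃ α ∈ binaryMixtures z, ∀ β, α β ≠ 0 → ∀ S : Finset (Fin n),
      (S : Set (Fin n)).OrdConnected → (⌊∑ i ∈ S, z i⌋ : ℝ) ≤ ∑ i ∈ S, toVec β i := by
  let μ : Measure ℝ := volume.restrict (Set.Ioc 0 1)
  have : IsProbabilityMeasure μ := ⟨by simp [μ]⟩
  have hmix := measureReal_preimage_mem_binaryMixtures μ (measurable_systematicSample z)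
  simp only [μ, integral_toVec_systematicSample hz] at hmix
  refine ⟨_, hmix, fun β hβ S hS => ?_⟩
  obtain ⟨θ, rfl⟩ : (systematicSample z ⁻¹' {β}).Nonempty := by
    rw [Set.nonempty_iff_ne_empty]
    intro hempty
    simp [hempty] at hβ
  exact floor_sum_le_sum_systematicSample hz θ hS

lemma binaryMixtures_nonempty (hz : z ∈ Set.Icc 0 1) : (binaryMixtures z).Nonempty :=
  (exists_binaryMixture_floor_sum_le hz).imp fun _ h => h.1

end SystematicSampling

lemma le_concavify_vagg {n : ℕ} {A : Finset (Finset (Fin n))}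
    (hA : ∀ S ∈ A, (S : Set (Fin n)).OrdConnected) (f : ℝ) {z : Fin n → ℝ}
    (hz : z ∈ Set.Icc 0 1) (hzA : ∀ S ∈ A, 1 ≤ ∑ j ∈ S, z j) :
    f ≤ concavify n (fun β => vagg A f (toVec β)) z := by
  obtain ⟨α, hα, hfloor⟩ := exists_binaryMixture_floor_sum_le hz
  refine le_concavify hα fun β hβ =>
    le_vagg_of_forall_one_le_sum f (toVec_nonneg β) fun S hS => ?_
  calc (1 : ℝ) ≤ ⌊∑ j ∈ S, z j⌋ := mod_cast Int.le_floor.2 (mod_cast hzA S hS)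
    _ ≤ ∑ j ∈ S, toVec β j := hfloor β hβ S (hA S hS)

lemma concavify_vagg_nonneg {n : ℕ} (A : Finset (Finset (Fin n))) (f : ℝ) {x : Fin n → ℝ}
    (hx : x ∈ Set.Icc 0 1) : 0 ≤ concavify n (fun β => vagg A f (toVec β)) x := by
  obtain ⟨α, hα⟩ := binaryMixtures_nonempty hx
  exact le_concavify hα fun β _ => vagg_nonneg A f (toVec_nonneg β)

lemma mul_le_concavify_vagg {n : ℕ} {A : Finset (Finset (Fin n))}
    (hA : ∀ S ∈ A, (S : Set (Fin n)).OrdConnected) (f : ℝ) {x : Fin n → ℝ}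
    (hx : x ∈ Set.Icc 0 1) {y : ℝ} (hy : y ∈ coverLevels A x) :
    f * y ≤ concavify n (fun β => vagg A f (toVec β)) x := by
  rcases hy.1.1.eq_or_lt with rfl | hy0
  · simpa using concavify_vagg_nonneg A f hx
  obtain ⟨z, hz, w, hw, hzA, rfl⟩ := exists_smul_add_smul_eq_of_mem_coverLevels hx hy0 hy
  have hy1 : 0 ≤ 1 - y := sub_nonneg.2 hy.1.2
  set g := concavify n fun β => vagg A f (toVec β)
  calc f * y = y * f + (1 - y) * 0 := by ring
    _ ≤ y * g z + (1 - y) * g w := by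
        gcongr
        exacts [le_concavify_vagg hA f hz hzA, concavify_vagg_nonneg A f hw]
    _ ≤ g (y • z + (1 - y) • w) :=
        (concaveOn_concavify _).2 (binaryMixtures_nonempty hz) (binaryMixtures_nonempty hw)
          hy0.le hy1 (add_sub_cancel y 1)

/-- Proposition 3(iii) of the paper.
If every set of the family `𝒜` of subsets of `{1,…,n}` (modelled as `Fin n`) is an
interval (a set of consecutive integers), then the concavification of the restriction
of `v^agg` to `{0,1}^n` equals `v^agg` on all of `[0,1]^n`. -/
theorem stmt_11 (n : ℕ) (hn : 0 < n) (A : Finset (Finset (Fin n)))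
    (hA : ∀ S ∈ A, ∀ a ∈ S, ∀ b ∈ S, ∀ c : Fin n, a ≤ c → c ≤ b → c ∈ S)
    (f : ℝ) (hf : 0 < f)
    (x : Fin n → ℝ) (hx : ∀ i, x i ∈ Set.Icc (0 : ℝ) 1) :
    concavify n (fun β => vagg A f (toVec β)) x = vagg A f x := by
  have hcube : x ∈ Set.Icc 0 1 := ⟨fun i => (hx i).1, fun i => (hx i).2⟩
  have hconn : ∀ S ∈ A, (S : Set (Fin n)).OrdConnected := fun S hS =>
    ⟨fun a ha b hb c hc => hA S hS a ha b hb c hc.1 hc.2⟩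
  obtain ⟨y, hy, hyx⟩ := (isGreatest_vagg A f hcube.1).1
  refine le_antisymm ?_ (hyx ▸ mul_le_concavify_vagg hconn f hcube hy)
  exact concavify_le_of_concaveOn (concaveOn_vagg A f) toVec_nonneg (binaryMixtures_nonempty hcube)
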